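/- Let (K, σ) be a difference field with n ≥ 2. For every m ∈ M(K) there exists a unique u ∈ U(K) such that σ(u)·m·u⁻¹ ∈ A(K). That is, the group U(K) acts freely on M(K) by the σ-twisted gauge transformation u·m := σ(u)·m·u⁻¹, and A(K) is a cross-section for this action. (This is the SL(n) instance, over an arbitrary difference field, of the q-difference Drinfeld–Sokolov cross-section theorem of Frenkel–Reshetikhin–Semenov-Tian-Shansky and Sevostyanov.) -/

import Mathlib

/-- Steinberg's cross-section `A(K)` for `SL(n)` and the standard Coxeter element. -/
def IsSteinbergA {n : ℕ} {R : Type*} [CommRing R] (m : Matrix (Fin n) (Fin n) R) : Prop :=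
  (∀ i j : Fin n, (i : ℕ) = 0 → (j : ℕ) = n - 1 → m i j = (-1) ^ (n - 1)) ∧
  (∀ i j : Fin n, (i : ℕ) = (j : ℕ) + 1 → m i j = 1) ∧
  (∀ i j : Fin n, (i : ℕ) ≠ 0 → (i : ℕ) ≠ (j : ℕ) + 1 → m i j = 0)

/-- Upper unitriangular matrices: the group `U(K)`. -/
def IsUniUpper {n : ℕ} {R : Type*} [CommRing R] (u : Matrix (Fin n) (Fin n) R) : Prop :=
  (∀ i : Fin n, u i i = 1) ∧ ∀ i j : Fin n, (j : ℕ) < (i : ℕ) → u i j = 0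

/-- The `K`-points of the double coset `M = U·c̄·U` of `SL(n)`. -/
def IsSteinbergM {n : ℕ} {R : Type*} [CommRing R] (m : Matrix (Fin n) (Fin n) R) : Prop :=
  m.det = 1 ∧
  (∀ i j : Fin n, (i : ℕ) = (j : ℕ) + 1 → m i j = 1) ∧
  (∀ i j : Fin n, (j : ℕ) + 1 < (i : ℕ) → m i j = 0)

/-- Rows of the gauge matrix, from the bottom row upwards. -/
noncomputable def gaugeRow {k : ℕ} {K : Type*} [Field K] (σ : K ≃+* K)
    (m : Matrix (Fin (k + 1)) (Fin (k + 1)) K) : ℕ → Fin (k + 1) → K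
  | 0 => Pi.single (Fin.last k) 1
  | t + 1 => fun j => ∑ l, σ (gaugeRow σ m t l) * m l j

theorem gaugeRow_shape {k : ℕ} {K : Type*} [Field K] (σ : K ≃+* K)
    (m : Matrix (Fin (k + 1)) (Fin (k + 1)) K) (hm : IsSteinbergM m) (t : ℕ) (ht : t ≤ k) :
    (∀ j : Fin (k + 1), (j : ℕ) + t = k → gaugeRow σ m t j = 1) ∧
    (∀ j : Fin (k + 1), (j : ℕ) + t < k → gaugeRow σ m t j = 0) := by
  obtain ⟨-, h1, h0⟩ := hm
  induction t with
  | zero =>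
    constructor
    · intro j hj
      have : j = Fin.last k := Fin.ext (by simpa using hj)
      subst this
      simp [gaugeRow]
    · intro j hj
      have : j ≠ Fin.last k := by
        rintro rfl
        simp at hj
      simp [gaugeRow, this]
  | succ t ih =>
    obtain ⟨ih1, ih0⟩ := ih (by omega)
    constructor
    · intro j hj
      simp only [gaugeRow]
      rw [Finset.sum_eq_single (⟨j + 1, by omega⟩ : Fin (k + 1))]
      · rw [ih1 _ (by simp; omega), h1 _ _ rfl]
        simp
      · intro l _ hl
        have hl' : (l : ℕ) ≠ j + 1 := fun h => hl (Fin.ext h)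
        rcases lt_or_gt_of_ne hl' with h | h
        · rw [ih0 l (by omega)]; simp
        · rw [h0 l j h]; simp
      · simp
    · intro j hj
      simp only [gaugeRow]
      apply Finset.sum_eq_zero
      intro l _
      by_cases h : (l : ℕ) + t < k
      · rw [ih0 l h]; simp
      · rw [h0 l j (by omega)]; simp

theorem IsUniUpper.det_eq_one {n : ℕ} {R : Type*} [CommRing R] {u : Matrix (Fin n) (Fin n) R}
    (hu : IsUniUpper u) : u.det = 1 := by
  rw [Matrix.det_of_upperTriangular (fun i j h => hu.2 i j h)]
  simp [hu.1]

theorem corner_det {k : ℕ} {K : Type*} [Field K] (a : Matrix (Fin (k + 1)) (Fin (k + 1)) K)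
    (ha : ∀ (i : Fin k) (j : Fin (k + 1)), a i.succ j = if j = i.castSucc then 1 else 0) :
    a.det = (-1) ^ k * a 0 (Fin.last k) := by
  rw [Matrix.det_succ_column a (Fin.last k), Finset.sum_eq_single 0]
  · have : a.submatrix (Fin.succAbove 0) (Fin.succAbove (Fin.last k)) = 1 := by
      ext i j
      simp only [Matrix.submatrix_apply, Fin.succAbove_zero, Fin.succAbove_last, ha,
        Matrix.one_apply]
      simp [eq_comm]
    rw [this]
    simp
  · intro i _ hi
    obtain ⟨i, rfl⟩ := Fin.exists_succ_eq.2 hi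
    rw [ha, if_neg (Fin.castSucc_lt_last i).ne']
    simp
  · simp

theorem gauge_rows {k : ℕ} {K : Type*} [Field K] (σ : K ≃+* K)
    (m u : Matrix (Fin (k + 1)) (Fin (k + 1)) K)
    (hu : IsUniUpper u) (hA : IsSteinbergA (u.map σ * m * u⁻¹)) (t : ℕ) :
    ∀ i : Fin (k + 1), (i : ℕ) + t = k → u i = gaugeRow σ m t := by
  have hdet : IsUnit u.det := by rw [hu.det_eq_one]; exact isUnit_one
  induction t with
  | zero =>
    intro i hi
    have : i = Fin.last k := Fin.ext (by simpa using hi)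
    subst this
    ext j
    simp only [gaugeRow]
    by_cases hj : j = Fin.last k
    · subst hj
      simp [hu.1]
    · rw [Pi.single_eq_of_ne hj]
      exact hu.2 _ _ (Fin.lt_last_iff_ne_last.2 hj)
  | succ t ih =>
    intro i hi
    have hs := ih ⟨i + 1, by omega⟩ (by simp; omega)
    have key : u.map σ * m = (u.map σ * m * u⁻¹) * u := by
      rw [Matrix.mul_assoc _ u⁻¹ u, Matrix.nonsing_inv_mul u hdet, Matrix.mul_one]
    ext j
    have e := congrFun (congrFun key ⟨i + 1, by omega⟩) j
    generalize u.map σ * m * u⁻¹ = a at hA e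
    rw [Matrix.mul_apply, Matrix.mul_apply, Finset.sum_eq_single (f := fun l => a _ l * _) i] at e
    · rw [hA.2.1 _ i rfl, one_mul] at e
      rw [← e]
      simp only [gaugeRow, Matrix.map_apply, hs]
    · intro l _ hl
      rw [hA.2.2 _ l (by simp) (by
        intro h
        apply hl
        apply Fin.ext
        simp at h
        omega), zero_mul]
    · simp

/-- for a difference field `(K, σ)` and every `m ∈ M(K)` there is a unique
`u ∈ U(K)` with `σ(u)·m·u⁻¹ ∈ A(K)`: `U(K)` acts freely on `M(K)` by the σ-twisted gauge
transformation and `A(K)` is a cross-section (the q-difference Drinfeld–Sokolov cross-section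
theorem for `SL(n)`). -/
theorem stmt_15 (n : ℕ) (hn : 2 ≤ n) (K : Type*) [Field K] (σ : K ≃+* K)
    (m : Matrix (Fin n) (Fin n) K) (hm : IsSteinbergM m) :
    ∃! u : Matrix (Fin n) (Fin n) K,
      IsUniUpper u ∧ IsSteinbergA (u.map σ * m * u⁻¹) := by
  obtain ⟨k, rfl⟩ : ∃ k, n = k + 1 := ⟨n - 1, by omega⟩
  have hU : IsUniUpper (Matrix.of fun i : Fin (k + 1) => gaugeRow σ m (k - i)) := by
    constructor
    · intro i
      exact (gaugeRow_shape σ m hm (k - i) (by omega)).1 i (by omega)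
    · intro i j h
      exact (gaugeRow_shape σ m hm (k - i) (by omega)).2 j (by omega)
  refine ⟨Matrix.of fun i => gaugeRow σ m (k - i), ⟨hU, ?_⟩, ?_⟩
  · have hrow : ∀ (i : Fin k) (j : Fin (k + 1)),
        ((Matrix.of fun i : Fin (k + 1) => gaugeRow σ m (k - i)).map σ * m) i.succ j =
        (Matrix.of fun i : Fin (k + 1) => gaugeRow σ m (k - i)) i.castSucc j := by
      intro i j
      rw [Matrix.mul_apply]
      have : k - (i : ℕ) = (k - (i + 1)) + 1 := by omega
      simp only [Matrix.map_apply, Matrix.of_apply, Fin.val_castSucc, Fin.val_succ]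
      rw [this]
      simp only [gaugeRow]
    generalize (Matrix.of fun i : Fin (k + 1) => gaugeRow σ m (k - i)) = u at hU hrow
    have hdet : IsUnit u.det := by rw [hU.det_eq_one]; exact isUnit_one
    have ha : ∀ (i : Fin k) (j : Fin (k + 1)),
        (u.map σ * m * u⁻¹) i.succ j = if j = i.castSucc then 1 else 0 := by
      intro i j
      rw [Matrix.mul_apply]
      simp only [hrow]
      rw [← Matrix.mul_apply, Matrix.mul_nonsing_inv u hdet, Matrix.one_apply]
      simp [eq_comm]
    have hd : (u.map σ * m * u⁻¹).det = 1 := by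
      have h1 : (u.map σ).det = 1 := by
        have : IsUniUpper (u.map σ) :=
          ⟨fun i => by simp [hU.1], fun i j h => by simp [hU.2 i j h]⟩
        exact this.det_eq_one
      have h2 := congrArg Matrix.det (Matrix.mul_nonsing_inv u hdet)
      rw [Matrix.det_mul, hU.det_eq_one, one_mul, Matrix.det_one] at h2
      rw [Matrix.det_mul, Matrix.det_mul, h1, h2, hm.1]
      simp
    rw [corner_det _ ha] at hd
    refine ⟨?_, ?_, ?_⟩
    · intro i j hi hj
      have hi' : i = 0 := Fin.ext hi
      have hj' : j = Fin.last k := Fin.ext (by simpa using hj)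
      subst hi' hj'
      have hsq : ((-1 : K) ^ k) * (-1) ^ k = 1 := by
        rw [← mul_pow]; simp
      simp only [Nat.add_sub_cancel]
      calc _ = ((-1 : K) ^ k * (-1) ^ k) * (u.map σ * m * u⁻¹) 0 (Fin.last k) := by
            rw [hsq, one_mul]
        _ = _ := by rw [mul_assoc, hd, mul_one]
    · intro i j hij
      obtain ⟨i, rfl⟩ := Fin.exists_succ_eq.2 (show i ≠ 0 by rintro rfl; simp at hij)
      rw [ha, if_pos]
      apply Fin.ext
      simp at hij ⊢
      omega
    · intro i j hi hij
      obtain ⟨i, rfl⟩ := Fin.exists_succ_eq.2 (show i ≠ 0 by rintro rfl; simp at hi)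
      rw [ha, if_neg]
      rintro rfl
      simp at hij
  · rintro u ⟨hu, hA⟩
    ext i j
    rw [gauge_rows σ m u hu hA (k - i) i (by omega)]
    rfl
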